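/- Let h⁻¹ : ℝ^n → E be uniformly continuous and let q_ξ be a probability density on ℝ^n. Let ρ_k and ρ'_k, k ≥ 0, be two sequences of probability measures on ℝ^n such that ‖ρ_k − ρ'_k‖_BL → 0 as k → ∞. Then Δ_k → 0 as k → ∞, where Δ_k = ∫ sup_{f ∈ Lip} | ∫ f(h⁻¹(x)) q_ξ(y−x) ρ_k(dx) − ( ∫ f(h⁻¹(x)) q_ξ(y−x) ρ'_k(dx) / ∫ q_ξ(y−x) ρ'_k(dx) ) · ∫ q_ξ(y−x) ρ_k(dx) | dy, with the convention 0/0 = 1. -/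

import Mathlib

open MeasureTheory ProbabilityTheory Filter
open scoped ENNReal NNReal Topology

noncomputable section

/-- Division with the convention `0/0 = 1` (more precisely `a/0 = 1`). -/
def convDiv (a c : ℝ) : ℝ := if c = 0 then 1 else a / c

/-- The integrand
`sup_{f ∈ Lip} | ∫ f(h⁻¹(x)) q(y−x) ρ(dx) −
  (∫ f(h⁻¹(x)) q(y−x) ρ'(dx) / ∫ q(y−x) ρ'(dx)) ∫ q(y−x) ρ(dx) |`,
where the supremum runs over all `f : E → ℝ` with `‖f‖_∞ ≤ 1` and `‖f‖_L ≤ 1`,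
with the convention `0/0 = 1` for the ratio. -/
def innerSup {E : Type*} [PseudoMetricSpace E] {N : ℕ}
    (hinv : (Fin N → ℝ) → E) (q : (Fin N → ℝ) → ℝ)
    (ρ ρ' : Measure (Fin N → ℝ)) (y : Fin N → ℝ) : ℝ :=
  sSup { r : ℝ | ∃ f : E → ℝ, (∀ x, |f x| ≤ 1) ∧ LipschitzWith 1 f ∧
    r = |(∫ x, f (hinv x) * q (y - x) ∂ρ) -
      convDiv (∫ x, f (hinv x) * q (y - x) ∂ρ') (∫ x, q (y - x) ∂ρ') *
        ∫ x, q (y - x) ∂ρ| }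


/-- Dual bounded-Lipschitz distance between two measures on a metric space. -/
def blDist {S : Type*} [MeasurableSpace S] [PseudoMetricSpace S] (ρ ρ' : Measure S) : ℝ :=
  sSup { r : ℝ | ∃ f : S → ℝ, (∀ x, |f x| ≤ 1) ∧ LipschitzWith 1 f ∧
    r = |(∫ x, f x ∂ρ) - ∫ x, f x ∂ρ'| }

/-!
The bounded-Lipschitz distance controls integrals of Banach-valued maps: composing with functionals
of norm at most one and replacing the scalar integrand by its Lipschitz inf-convolution, one sees
that `blDist (ρ k) (ρ' k) → 0` forces `∫ F ∂(ρ k) - ∫ F ∂(ρ' k) → 0` in norm for *every* bounded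
uniformly continuous `F`. All the uniformity over `f` and `y` in the theorem is therefore put into
the target space of a single map: `F x` is the translate `y ↦ q (y - x)` multiplied by the
evaluation functional at `hinv x`, an element of `L¹(dy; ℓ^∞(Lip))`. It is uniformly continuous
because translation is continuous in `L¹` and evaluation functionals are Lipschitz in the base
point. Finally, with `a, a'` the integrals of `f (hinv x) * q (y - x)` and `c, c'` those of
`q (y - x)` against `ρ, ρ'`, one has `|a'| ≤ c'` and
`a - a' / c' * c = (a - a') - a' / c' * (c - c')`.
-/

section BoundedLipschitz

variable {S : Type*} [PseudoMetricSpace S]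

theorem exists_lipschitzWith_abs_sub_le {g : S → ℝ} {M : ℝ≥0} (hM : ∀ x, |g x| ≤ M)
    {δ : ℝ≥0} (hδ : δ ≠ 0) {ε : ℝ} (hε : ∀ x z, dist x z < δ → |g x - g z| ≤ ε) :
    ∃ u : S → ℝ, (∀ x, |u x| ≤ M) ∧ LipschitzWith (2 * M / δ) u ∧ ∀ x, |g x - u x| ≤ ε := by
  set K : ℝ≥0 := 2 * M / δ
  let u : S → ℝ := fun x => ⨅ z, (g z + K * dist x z)
  have hlow (x z : S) : -(M : ℝ) ≤ g z + K * dist x z :=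
    (abs_le.1 (hM z)).1.trans (le_add_of_nonneg_right (by positivity))
  have hle (x z : S) : u x ≤ g z + K * dist x z :=
    ciInf_le ⟨-(M : ℝ), Set.forall_mem_range.2 (hlow x)⟩ z
  have hug (x : S) : u x ≤ g x := by simpa using hle x x
  have hgu (x : S) : g x - ε ≤ u x := by
    have : Nonempty S := ⟨x⟩
    refine le_ciInf fun z => ?_
    rcases lt_or_ge (dist x z) δ with hxz | hxz
    · have hK0 : 0 ≤ (K : ℝ) * dist x z := by positivity
      linarith [(abs_le.1 (hε x z hxz)).2]
    · have hKδ : (2 * M : ℝ) ≤ K * dist x z := calc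
        (2 * M : ℝ) = K * δ := by exact_mod_cast (div_mul_cancel₀ (2 * M) hδ).symm
        _ ≤ K * dist x z := by gcongr
      have hε0 : 0 ≤ ε := (abs_nonneg _).trans (hε x x (by simpa using hδ.bot_lt))
      linarith [(abs_le.1 (hM x)).2, (abs_le.1 (hM z)).1]
  refine ⟨u, fun x => ?_, LipschitzWith.of_le_add_mul K fun x y => ?_, fun x => ?_⟩
  · have : Nonempty S := ⟨x⟩
    exact abs_le.2 ⟨le_ciInf (hlow x), (hug x).trans (abs_le.1 (hM x)).2⟩
  · have : Nonempty S := ⟨x⟩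
    rw [← sub_le_iff_le_add]
    refine le_ciInf fun z => ?_
    have hxz : (K : ℝ) * dist x z ≤ K * (dist x y + dist y z) := by
      gcongr
      exact dist_triangle x y z
    linarith [hle x z]
  · rw [abs_of_nonneg (sub_nonneg.2 (hug x))]
    linarith [hgu x]

variable [MeasurableSpace S] (ρ ρ' : Measure S) [IsFiniteMeasure ρ] [IsFiniteMeasure ρ']

theorem bddAbove_blDist : BddAbove { r : ℝ | ∃ f : S → ℝ, (∀ x, |f x| ≤ 1) ∧ LipschitzWith 1 f ∧
    r = |(∫ x, f x ∂ρ) - ∫ x, f x ∂ρ'| } := by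
  refine ⟨ρ.real Set.univ + ρ'.real Set.univ, ?_⟩
  rintro _ ⟨f, hf, -, rfl⟩
  have hν (ν : Measure S) [IsFiniteMeasure ν] : |∫ x, f x ∂ν| ≤ ν.real Set.univ := by
    simpa using norm_integral_le_of_norm_le_const (μ := ν) (f := f) (ae_of_all _ hf)
  exact (abs_sub _ _).trans (add_le_add (hν ρ) (hν ρ'))

theorem abs_integral_sub_integral_le_mul_blDist {C : ℝ≥0} {f : S → ℝ} (hfC : ∀ x, |f x| ≤ C)
    (hf : LipschitzWith C f) : |(∫ x, f x ∂ρ) - ∫ x, f x ∂ρ'| ≤ C * blDist ρ ρ' := by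
  rcases eq_or_ne C 0 with rfl | hC
  · have hf0 : f = 0 := funext fun x => abs_nonpos_iff.1 (by simpa using hfC x)
    simp [hf0]
  have hC0 : (0 : ℝ) < C := hC.bot_lt
  have habs (t : ℝ) : |(C : ℝ)⁻¹ * t| = (C : ℝ)⁻¹ * |t| := by
    rw [abs_mul, abs_of_pos (inv_pos.2 hC0)]
  have hmem : |(∫ x, (C : ℝ)⁻¹ * f x ∂ρ) - ∫ x, (C : ℝ)⁻¹ * f x ∂ρ'| ≤ blDist ρ ρ' := by
    refine le_csSup (bddAbove_blDist ρ ρ') ⟨_, fun x => ?_, ?_, rfl⟩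
    · rw [habs, inv_mul_le_iff₀ hC0, mul_one]
      exact hfC x
    · refine LipschitzWith.of_dist_le_mul fun x y => ?_
      rw [Real.dist_eq, ← mul_sub, habs, inv_mul_le_iff₀ hC0]
      simpa [Real.dist_eq] using hf.dist_le_mul x y
  rwa [integral_const_mul, integral_const_mul, ← mul_sub, habs, inv_mul_le_iff₀ hC0] at hmem

variable [OpensMeasurableSpace S]

theorem abs_integral_sub_integral_le_of_forall_dist_lt {g : S → ℝ} (hg : Continuous g) {M : ℝ≥0}
    (hM : ∀ x, |g x| ≤ M) {δ : ℝ≥0} (hδ : δ ≠ 0) {ε : ℝ}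
    (hε : ∀ x z, dist x z < δ → |g x - g z| ≤ ε) :
    |(∫ x, g x ∂ρ) - ∫ x, g x ∂ρ'| ≤
      ε * (ρ.real Set.univ + ρ'.real Set.univ) + (max M (2 * M / δ) : ℝ≥0) * blDist ρ ρ' := by
  obtain ⟨u, huM, hu, hgu⟩ := exists_lipschitzWith_abs_sub_le hM hδ hε
  have hint {v : S → ℝ} (hv : Continuous v) (hvM : ∀ x, |v x| ≤ M) (ν : Measure S)
      [IsFiniteMeasure ν] : Integrable v ν :=
    .of_bound hv.measurable.aestronglyMeasurable M (ae_of_all _ hvM)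
  have happrox (ν : Measure S) [IsFiniteMeasure ν] :
      |(∫ x, g x ∂ν) - ∫ x, u x ∂ν| ≤ ε * ν.real Set.univ := by
    rw [← integral_sub (hint hg hM ν) (hint hu.continuous huM ν)]
    exact norm_integral_le_of_norm_le_const (f := fun x => g x - u x) (ae_of_all _ hgu)
  have hbl : |(∫ x, u x ∂ρ) - ∫ x, u x ∂ρ'| ≤ (max M (2 * M / δ) : ℝ≥0) * blDist ρ ρ' :=
    abs_integral_sub_integral_le_mul_blDist ρ ρ'
      (fun x => (huM x).trans (NNReal.coe_le_coe.2 (le_max_left _ _)))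
      (hu.weaken (le_max_right _ _))
  have hρ := abs_le.1 (happrox ρ)
  have hρ' := abs_le.1 (happrox ρ')
  have hu' := abs_le.1 hbl
  exact abs_le.2 ⟨by linarith, by linarith⟩

variable [SecondCountableTopology S] {B : Type*} [NormedAddCommGroup B]

theorem integrable_of_continuous_of_norm_le {F : S → B} (hF : Continuous F) {M : ℝ}
    (hM : ∀ x, ‖F x‖ ≤ M) : Integrable F ρ :=
  .of_bound hF.stronglyMeasurable.aestronglyMeasurable M (ae_of_all _ hM)

variable [NormedSpace ℝ B] [CompleteSpace B]

theorem norm_integral_sub_integral_le_of_forall_dist_lt {F : S → B} (hF : Continuous F) {M : ℝ≥0}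
    (hM : ∀ x, ‖F x‖ ≤ M) {δ : ℝ≥0} (hδ : δ ≠ 0) {ε : ℝ}
    (hε : ∀ x z, dist x z < δ → ‖F x - F z‖ ≤ ε) :
    ‖(∫ x, F x ∂ρ) - ∫ x, F x ∂ρ'‖ ≤
      ε * (ρ.real Set.univ + ρ'.real Set.univ) + (max M (2 * M / δ) : ℝ≥0) * blDist ρ ρ' := by
  obtain ⟨ℓ, hℓ, hℓF⟩ := exists_dual_vector'' ℝ ((∫ x, F x ∂ρ) - ∫ x, F x ∂ρ')
  have hℓ_le (b : B) : |ℓ b| ≤ ‖b‖ := (ℓ.le_of_opNorm_le hℓ b).trans_eq (one_mul _)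
  have hℓ_int (ν : Measure S) [IsFiniteMeasure ν] : ℓ (∫ x, F x ∂ν) = ∫ x, ℓ (F x) ∂ν :=
    (ℓ.integral_comp_comm (integrable_of_continuous_of_norm_le ν hF hM)).symm
  calc ‖(∫ x, F x ∂ρ) - ∫ x, F x ∂ρ'‖
      = (∫ x, ℓ (F x) ∂ρ) - ∫ x, ℓ (F x) ∂ρ' := by
        rw [← hℓ_int ρ, ← hℓ_int ρ', ← map_sub, hℓF, RCLike.ofReal_real_eq_id, id]
    _ ≤ |(∫ x, ℓ (F x) ∂ρ) - ∫ x, ℓ (F x) ∂ρ'| := le_abs_self _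
    _ ≤ _ := abs_integral_sub_integral_le_of_forall_dist_lt ρ ρ' (ℓ.continuous.comp hF)
        (fun x => (hℓ_le _).trans (hM x)) hδ
        (fun x z hxz => by simpa using (hℓ_le (F x - F z)).trans (hε x z hxz))

theorem tendsto_integral_sub_integral_of_tendsto_blDist {F : S → B} (hF : UniformContinuous F)
    {M : ℝ≥0} (hM : ∀ x, ‖F x‖ ≤ M) {ι : Type*} {l : Filter ι} {ρ ρ' : ι → Measure S}
    [∀ i, IsProbabilityMeasure (ρ i)] [∀ i, IsProbabilityMeasure (ρ' i)]
    (hbl : Tendsto (fun i => blDist (ρ i) (ρ' i)) l (𝓝 0)) :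
    Tendsto (fun i => (∫ x, F x ∂(ρ i)) - ∫ x, F x ∂(ρ' i)) l (𝓝 0) := by
  refine Metric.tendsto_nhds.2 fun ε hε => ?_
  obtain ⟨δ, hδ, hFδ⟩ := Metric.uniformContinuous_iff.1 hF (ε / 4) (by positivity)
  lift δ to ℝ≥0 using hδ.le
  set C : ℝ≥0 := max M (2 * M / δ)
  have hC : Tendsto (fun i => C * blDist (ρ i) (ρ' i)) l (𝓝 0) := by
    simpa using hbl.const_mul (C : ℝ)
  filter_upwards [hC.eventually_lt_const (half_pos hε)] with i hi
  rw [dist_zero_right]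
  calc ‖(∫ x, F x ∂(ρ i)) - ∫ x, F x ∂(ρ' i)‖
      ≤ ε / 4 * ((ρ i).real Set.univ + (ρ' i).real Set.univ) + C * blDist (ρ i) (ρ' i) :=
        norm_integral_sub_integral_le_of_forall_dist_lt _ _ hF.continuous hM
          (by exact_mod_cast hδ.ne') fun x z hxz => by
            simpa [dist_eq_norm] using (hFδ hxz).le
    _ < ε / 4 * (1 + 1) + ε / 2 := by simpa using hi
    _ = ε := by ring

end BoundedLipschitz

theorem uniformContinuous_clm_apply_apply {X G H B : Type*} [UniformSpace X]
    [NormedAddCommGroup G] [NormedSpace ℝ G] [NormedAddCommGroup H] [NormedSpace ℝ H]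
    [NormedAddCommGroup B] [NormedSpace ℝ B] (L : G →L[ℝ] H →L[ℝ] B)
    {u : X → G} (hu : UniformContinuous u) {M : ℝ} (hM : ∀ x, ‖u x‖ ≤ M)
    {v : X → H} (hv : UniformContinuous v) {M' : ℝ} (hM' : ∀ x, ‖v x‖ ≤ M') :
    UniformContinuous fun x => L (u x) (v x) := by
  rw [UniformContinuous, tendsto_uniformity_iff_dist_tendsto_zero] at hu hv ⊢
  have hlim := (((hu.const_mul ‖L‖).mul_const M').add (hv.const_mul (‖L‖ * M)))
  simp only [mul_zero, zero_mul, add_zero] at hlim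
  refine squeeze_zero (fun _ => dist_nonneg) (fun p => ?_) hlim
  calc dist (L (u p.1) (v p.1)) (L (u p.2) (v p.2))
      = ‖L (u p.1 - u p.2) (v p.1) + L (u p.2) (v p.1 - v p.2)‖ := by
        simp [dist_eq_norm]
    _ ≤ ‖L‖ * dist (u p.1) (u p.2) * M' + ‖L‖ * M * dist (v p.1) (v p.2) := by
        rw [dist_eq_norm, dist_eq_norm]
        exact norm_add_le_of_le (L.le_of_opNorm₂_le_of_le le_rfl le_rfl (hM' _))
          (L.le_of_opNorm₂_le_of_le le_rfl (hM _) le_rfl)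

theorem coeFn_integral_ae_eq {X Y B : Type*} [MeasurableSpace X] [MeasurableSpace Y]
    [NormedAddCommGroup B] [NormedSpace ℝ B] [CompleteSpace B] {μ : Measure Y} [SFinite μ]
    {ρ : Measure X} [SFinite ρ] {F : X → Lp B 1 μ} (hF : Integrable F ρ) {u : Y → X → B}
    (hu : Integrable (Function.uncurry u) (μ.prod ρ))
    (hFu : ∀ᵐ x ∂ρ, F x =ᵐ[μ] fun y => u y x) :
    ⇑(∫ x, F x ∂ρ) =ᵐ[μ] fun y => ∫ x, u y x ∂ρ := by
  refine Integrable.ae_eq_of_forall_setIntegral_eq _ _ (L1.integrable_coeFn _)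
    hu.integral_prod_left fun s _ _ => ?_
  let J : Lp B 1 μ →L[ℝ] B := L1.integralCLM.comp (LpToLpRestrictCLM Y B ℝ μ 1 s)
  have hJ (G : Lp B 1 μ) : J G = ∫ y in s, G y ∂μ := by
    rw [← integral_congr_ae (LpToLpRestrictCLM_coeFn ℝ s G), ← L1.integral_eq_integral,
      L1.integral_eq]
    rfl
  calc ∫ y in s, (∫ x, F x ∂ρ) y ∂μ = ∫ x, ∫ y in s, F x y ∂μ ∂ρ := by
        rw [← hJ, ← J.integral_comp_comm hF]
        simp_rw [hJ]
    _ = ∫ x, ∫ y in s, u y x ∂μ ∂ρ := integral_congr_ae <| hFu.mono fun x hx =>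
        integral_congr_ae (ae_restrict_of_ae hx)
    _ = ∫ y in s, ∫ x, u y x ∂ρ ∂μ :=
        (integral_integral_swap (hu.mono_measure
          (Measure.prod_mono Measure.restrict_le_self le_rfl))).symm

section Convolution

open scoped Convolution

variable {V : Type*} [NormedAddCommGroup V] [MeasurableSpace V] [BorelSpace V] {μ : Measure V}
  {H : Type*} [NormedAddCommGroup H]

theorem coeFn_mk_neg_vadd_toLp [μ.IsAddLeftInvariant] {p : ℝ≥0∞} {g : V → H}
    (hg : MemLp g p μ) (x : V) : ⇑(DomAddAct.mk (-x) +ᵥ hg.toLp g) =ᵐ[μ] fun y => g (y - x) := by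
  rw [DomAddAct.mk_vadd_toLp]
  exact (MemLp.coeFn_toLp _).trans (ae_of_all _ fun y => congrArg g (neg_add_eq_sub x y))

variable [ProperSpace V] [μ.IsAddHaarMeasure]

theorem uniformContinuous_mk_neg_vadd_Lp {p : ℝ≥0∞} [Fact (1 ≤ p)] [Fact (p ≠ ∞)] (g : Lp H p μ) :
    UniformContinuous fun x : V => DomAddAct.mk (-x) +ᵥ g := by
  have hcont : Continuous fun w : V => DomAddAct.mk w +ᵥ g :=
    DomAddAct.continuous_mk.vadd continuous_const
  refine Metric.uniformContinuous_iff.2 fun ε hε => ?_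
  obtain ⟨δ, hδ, hgδ⟩ := Metric.continuous_iff.1 hcont 0 ε hε
  refine ⟨δ, hδ, fun {x z} hxz => ?_⟩
  have hshift : DomAddAct.mk (-x) +ᵥ g = DomAddAct.mk (-z) +ᵥ (DomAddAct.mk (z - x) +ᵥ g) := by
    rw [vadd_vadd, ← DomAddAct.mk_add]
    congr 2
    abel
  rw [hshift, DomAddAct.dist_vadd_Lp]
  simpa using hgδ (z - x) (by simpa [dist_eq_norm, norm_sub_rev] using hxz)

variable [NormedSpace ℝ H] {G B : Type*} [NormedAddCommGroup G] [NormedSpace ℝ G]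
  [NormedAddCommGroup B] [NormedSpace ℝ B] [CompleteSpace B]

theorem tendsto_lintegral_enorm_convolution_sub (L : G →L[ℝ] H →L[ℝ] B)
    {f : V → G} (hf : UniformContinuous f) {M : ℝ} (hM : ∀ x, ‖f x‖ ≤ M) {g : V → H}
    (hg : Integrable g μ) {ι : Type*} {l : Filter ι} {ρ ρ' : ι → Measure V}
    [∀ i, IsProbabilityMeasure (ρ i)] [∀ i, IsProbabilityMeasure (ρ' i)]
    (hbl : Tendsto (fun i => blDist (ρ i) (ρ' i)) l (𝓝 0)) :
    Tendsto (fun i => ∫⁻ y, ‖(f ⋆[L, ρ i] g) y - (f ⋆[L, ρ' i] g) y‖ₑ ∂μ) l (𝓝 0) := by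
  have : Fact ((1 : ℝ≥0∞) ≠ ∞) := ⟨ENNReal.one_ne_top⟩
  have hg1 : MemLp g 1 μ := memLp_one_iff_integrable.2 hg
  let τ : V → Lp H 1 μ := fun x => DomAddAct.mk (-x) +ᵥ hg1.toLp g
  have hτ (x : V) : ‖τ x‖ = ‖hg1.toLp g‖ := DomAddAct.norm_vadd_Lp _ _
  let F : V → Lp B 1 μ := fun x => L.compLpL₂ 1 μ (f x) (τ x)
  have hF : UniformContinuous F := uniformContinuous_clm_apply_apply (L.compLpL₂ 1 μ) hf hM
    (uniformContinuous_mk_neg_vadd_Lp _) fun x => (hτ x).le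
  have hF_le (x : V) : ‖F x‖ ≤ (‖L.compLpL₂ 1 μ‖ * M * ‖hg1.toLp g‖).toNNReal :=
    ((L.compLpL₂ 1 μ).le_of_opNorm₂_le_of_le le_rfl (hM x) (hτ x).le).trans (Real.le_coe_toNNReal _)
  have hF_coe (x : V) : F x =ᵐ[μ] fun y => L (f x) (g (y - x)) := by
    filter_upwards [(L (f x)).coeFn_compLp (τ x), coeFn_mk_neg_vadd_toLp hg1 x] with y hy hy'
    exact hy.trans (congrArg (L (f x)) hy')
  have hint (ν : Measure V) [IsProbabilityMeasure ν] :
      ⇑(∫ x, F x ∂ν) =ᵐ[μ] f ⋆[L, ν] g :=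
    coeFn_integral_ae_eq (integrable_of_continuous_of_norm_le ν hF.continuous hF_le)
      ((integrable_of_continuous_of_norm_le ν hf.continuous hM).convolution_integrand L hg)
      (ae_of_all _ hF_coe)
  have hnorm (i : ι) : ∫⁻ y, ‖(f ⋆[L, ρ i] g) y - (f ⋆[L, ρ' i] g) y‖ₑ ∂μ =
      ‖(∫ x, F x ∂(ρ i)) - ∫ x, F x ∂(ρ' i)‖ₑ := by
    rw [Lp.enorm_def, eLpNorm_one_eq_lintegral_enorm]
    refine lintegral_congr_ae ?_
    filter_upwards [Lp.coeFn_sub (∫ x, F x ∂(ρ i)) (∫ x, F x ∂(ρ' i)), hint (ρ i), hint (ρ' i)]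
      with y hsub hρ hρ'
    rw [hsub, Pi.sub_apply, hρ, hρ']
  simp_rw [hnorm]
  simpa using (tendsto_integral_sub_integral_of_tendsto_blDist hF hF_le hbl).enorm

end Convolution

section InnerSup

open scoped BoundedContinuousFunction Convolution

/-- The class `Lip` of test functions: bounded by one and Lipschitz with constant one. It carries
the topology of uniform convergence, in which evaluation at a point is continuous. -/
def lipUnitBall (E : Type*) [PseudoMetricSpace E] : Set (E →ᵇ ℝ) :=
  {f | (∀ x, |f x| ≤ 1) ∧ LipschitzWith 1 f}

variable {E : Type*} [PseudoMetricSpace E]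

/-- Evaluation at a point of `E`, as a bounded function on `lipUnitBall E`. This is the embedding of
`E` into `ℓ^∞(Lip)` that turns a supremum over test functions into a norm. -/
def lipEval (x : E) : lipUnitBall E →ᵇ ℝ :=
  .ofNormedAddCommGroup (fun f => f.1 x)
    ((BoundedContinuousFunction.evalCLM ℝ x).continuous.comp continuous_subtype_val) 1
    fun f => f.2.1 x

theorem norm_lipEval_le (x : E) : ‖lipEval x‖ ≤ 1 :=
  BoundedContinuousFunction.norm_ofNormedAddCommGroup_le _ zero_le_one fun f => f.2.1 x

theorem lipschitzWith_lipEval : LipschitzWith 1 (lipEval : E → lipUnitBall E →ᵇ ℝ) :=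
  .of_dist_le_mul fun x y =>
    (BoundedContinuousFunction.dist_le (by positivity)).2 fun f => f.2.2.dist_le_mul x y

theorem abs_sub_convDiv_mul_le {a a' c c' G : ℝ} (ha' : |a'| ≤ c') (ha : |a - a'| ≤ G)
    (hc : |c - c'| ≤ G) : |a - convDiv a' c' * c| ≤ 2 * G := by
  have hdiv : |convDiv a' c'| ≤ 1 := by
    rw [convDiv]
    split_ifs
    · exact abs_one.le
    · rw [abs_div]
      exact div_le_one_of_le₀ (ha'.trans (le_abs_self _)) (abs_nonneg _)
  have hmul : convDiv a' c' * c' = a' := by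
    rw [convDiv]
    split_ifs with hc'
    · rw [hc', mul_zero]
      exact (abs_nonpos_iff.1 (hc' ▸ ha')).symm
    · exact div_mul_cancel₀ _ hc'
  calc |a - convDiv a' c' * c| = |(a - a') - convDiv a' c' * (c - c')| := by
        rw [mul_sub, hmul, sub_sub_sub_cancel_right]
    _ ≤ |a - a'| + |convDiv a' c'| * |c - c'| := (abs_sub _ _).trans_eq (by rw [abs_mul])
    _ ≤ G + 1 * G := by gcongr
    _ = 2 * G := by ring

open ContinuousLinearMap (lsmul)

section Convolution

variable {V : Type*} [Sub V] [MeasurableSpace V] {hinv : V → E} {q : V → ℝ} {ρ : Measure V} {y : V}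

theorem integrable_mul_of_convolutionExistsAt_lipEval
    (hρ : ConvolutionExistsAt (lipEval ∘ hinv) q y (lsmul ℝ ℝ).flip ρ) (f : lipUnitBall E) :
    Integrable (fun x => f.1 (hinv x) * q (y - x)) ρ :=
  ((BoundedContinuousFunction.evalCLM ℝ f).integrable_comp hρ).congr
    (ae_of_all _ fun x => mul_comm (q (y - x)) (f.1 (hinv x)))

theorem convolution_lipEval_apply
    (hρ : ConvolutionExistsAt (lipEval ∘ hinv) q y (lsmul ℝ ℝ).flip ρ) (f : lipUnitBall E) :
    ((lipEval ∘ hinv) ⋆[(lsmul ℝ ℝ).flip, ρ] q) y f = ∫ x, f.1 (hinv x) * q (y - x) ∂ρ :=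
  ((BoundedContinuousFunction.evalCLM ℝ f).integral_comp_comm hρ).symm.trans
    (integral_congr_ae (ae_of_all _ fun x => mul_comm (q (y - x)) (f.1 (hinv x))))

end Convolution

variable {N : ℕ} {hinv : (Fin N → ℝ) → E} {q : (Fin N → ℝ) → ℝ}

theorem innerSup_le_norm_convolution_sub (hq0 : ∀ y, 0 ≤ q y) {ρ ρ' : Measure (Fin N → ℝ)}
    {y : Fin N → ℝ} (hρ : ConvolutionExistsAt (lipEval ∘ hinv) q y (lsmul ℝ ℝ).flip ρ)
    (hρ' : ConvolutionExistsAt (lipEval ∘ hinv) q y (lsmul ℝ ℝ).flip ρ') :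
    innerSup hinv q ρ ρ' y ≤ 2 * ‖((lipEval ∘ hinv) ⋆[(lsmul ℝ ℝ).flip, ρ] q) y -
      ((lipEval ∘ hinv) ⋆[(lsmul ℝ ℝ).flip, ρ'] q) y‖ := by
  set D := ((lipEval ∘ hinv) ⋆[(lsmul ℝ ℝ).flip, ρ] q) y -
    ((lipEval ∘ hinv) ⋆[(lsmul ℝ ℝ).flip, ρ'] q) y
  have hsub (f : lipUnitBall E) :
      |(∫ x, f.1 (hinv x) * q (y - x) ∂ρ) - ∫ x, f.1 (hinv x) * q (y - x) ∂ρ'| ≤ ‖D‖ := by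
    rw [← convolution_lipEval_apply hρ, ← convolution_lipEval_apply hρ']
    exact D.norm_coe_le_norm f
  let one : lipUnitBall E := ⟨1, fun x => abs_one.le, LipschitzWith.const' 1⟩
  have hq : Integrable (fun x => q (y - x)) ρ' := by
    simpa [one] using integrable_mul_of_convolutionExistsAt_lipEval hρ' one
  refine Real.sSup_le ?_ (by positivity)
  rintro _ ⟨f, hf1, hf, rfl⟩
  refine abs_sub_convDiv_mul_le ?_ ?_ (by simpa [one] using hsub one)
  · rw [← Real.norm_eq_abs]
    refine norm_integral_le_of_norm_le hq (ae_of_all _ fun x => ?_)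
    rw [norm_mul, Real.norm_of_nonneg (hq0 _)]
    exact mul_le_of_le_one_left (hq0 _) (hf1 _)
  · exact hsub ⟨.ofNormedAddCommGroup f hf.continuous 1 hf1, hf1, hf⟩

theorem coupling_integral_tendsto_zero_general (hinv_uc : UniformContinuous hinv)
    (hq : Integrable q) (hq0 : ∀ y, 0 ≤ q y) {ι : Type*} {l : Filter ι}
    {ρ ρ' : ι → Measure (Fin N → ℝ)} [∀ i, IsProbabilityMeasure (ρ i)]
    [∀ i, IsProbabilityMeasure (ρ' i)]
    (hbl : Tendsto (fun i => blDist (ρ i) (ρ' i)) l (𝓝 0)) :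
    Tendsto (fun i => ∫⁻ y, ENNReal.ofReal (innerSup hinv q (ρ i) (ρ' i) y)) l (𝓝 0) := by
  have hf : UniformContinuous (lipEval ∘ hinv) :=
    lipschitzWith_lipEval.uniformContinuous.comp hinv_uc
  have hf1 (x : Fin N → ℝ) : ‖(lipEval ∘ hinv) x‖ ≤ 1 := norm_lipEval_le _
  have hconv (ν : Measure (Fin N → ℝ)) [IsProbabilityMeasure ν] :
      ∀ᵐ y, ConvolutionExistsAt (lipEval ∘ hinv) q y (lsmul ℝ ℝ).flip ν :=
    (integrable_of_continuous_of_norm_le ν hf.continuous hf1).ae_convolution_exists _ hq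
  have hlim := ENNReal.Tendsto.const_mul (a := 2)
    (tendsto_lintegral_enorm_convolution_sub (lsmul ℝ ℝ).flip hf hf1 hq hbl)
    (.inr ENNReal.ofNat_ne_top)
  rw [mul_zero] at hlim
  refine tendsto_of_tendsto_of_tendsto_of_le_of_le tendsto_const_nhds hlim
    (fun _ => zero_le) fun i => ?_
  rw [← lintegral_const_mul' _ _ ENNReal.ofNat_ne_top]
  refine lintegral_mono_ae ?_
  filter_upwards [hconv (ρ i), hconv (ρ' i)] with y hρ hρ'
  refine (ENNReal.ofReal_le_ofReal (innerSup_le_norm_convolution_sub hq0 hρ hρ')).trans_eq ?_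
  rw [ENNReal.ofReal_mul zero_le_two, ofReal_norm, ENNReal.ofReal_ofNat]

end InnerSup

/-- Let `h⁻¹ : ℝ^N → E` be uniformly continuous and `q` a probability
density on `ℝ^N`.  If `ρ_k, ρ'_k` are probability measures with `‖ρ_k − ρ'_k‖_BL → 0`,
then `Δ_k := ∫ sup_{f ∈ Lip} |⋯| dy → 0` as `k → ∞` (with the convention `0/0 = 1`). -/
theorem coupling_integral_tendsto_zero
    {E : Type*} [MeasurableSpace E] [MetricSpace E] {N : ℕ}
    (hinv : (Fin N → ℝ) → E) (hinv_uc : UniformContinuous hinv)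
    (q : (Fin N → ℝ) → ℝ) (hq : Measurable q) (hq0 : ∀ y, 0 ≤ q y)
    (hq1 : ∫⁻ y, ENNReal.ofReal (q y) = 1)
    (ρ ρ' : ℕ → Measure (Fin N → ℝ))
    (hρ : ∀ k, IsProbabilityMeasure (ρ k)) (hρ' : ∀ k, IsProbabilityMeasure (ρ' k))
    (hbl : Tendsto (fun k => blDist (ρ k) (ρ' k)) atTop (𝓝 0)) :
    Tendsto (fun k => ∫⁻ y, ENNReal.ofReal (innerSup hinv q (ρ k) (ρ' k) y))
      atTop (𝓝 0) := by
  have hq_int : Integrable q :=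
    ⟨hq.aestronglyMeasurable, by simp [hasFiniteIntegral_iff_ofReal (ae_of_all _ hq0), hq1]⟩
  exact coupling_integral_tendsto_zero_general hinv_uc hq_int hq0 hbl

end
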